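/- Every set of pairwise-commuting n-qubit Pauli operators is noncontextual. In particular, any set of diagonal Pauli operators (tensor products of I and Z, with ± signs), such as the set of terms of a diagonal Hamiltonian arising in QAOA, is noncontextual. -/

import Mathlib

/-!
All labels of a determining tree over a pairwise commuting set `S` lie in the commutative monoid
generated by `S`, so the root label is the product of the leaves in any order
(`PTree.Valid.exists_lift`). Suppose `A` and `-A` have trees with the same determining set. Then
every operator occurs an even number of times among the leaves of the two trees taken together.
Pauli operators square to `1` (`IsPauli.mul_self`), so the product of all these leaves is `1`
(`prod_eq_one_of_even_count`). On the other hand that product is `A * (-A) = -1`, which is absurd.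
-/

open Matrix

/-- Index type for `n` qubits: `Fin n → Fin 2` has cardinality `2^n`. -/
abbrev QubitIdx (n : ℕ) := Fin n → Fin 2

/-- `2^n × 2^n` complex matrices. -/
abbrev Mat (n : ℕ) := Matrix (QubitIdx n) (QubitIdx n) ℂ

/-- The four single-qubit Pauli matrices `I, X, Y, Z`. -/
noncomputable def pauliMat : Fin 4 → Matrix (Fin 2) (Fin 2) ℂ :=
  ![1, !![0, 1; 1, 0], !![0, -Complex.I; Complex.I, 0], !![1, 0; 0, -1]]

/-- The tensor product `P₁ ⊗ ⋯ ⊗ Pₙ` of single-qubit Pauli matrices. -/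
noncomputable def pauliTensor (n : ℕ) (f : Fin n → Fin 4) : Mat n :=
  fun i k => ∏ j, pauliMat (f j) (i j) (k j)

/-- An `n`-qubit Pauli operator: `ε • P₁ ⊗ ⋯ ⊗ Pₙ` with `ε ∈ {1, -1}`. -/
def IsPauli (n : ℕ) (M : Mat n) : Prop :=
  ∃ (ε : ℂ) (f : Fin n → Fin 4), (ε = 1 ∨ ε = -1) ∧ M = ε • pauliTensor n f

/-- Two operators anticommute. -/
def PAntiCommute {n : ℕ} (A B : Mat n) : Prop := A * B = -(B * A)

/-- Finite rooted trees whose nodes are labeled by `2^n × 2^n` matrices.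
A `leaf` has no children; a `node` has a (finite) list of children. -/
inductive PTree (n : ℕ) : Type
  | leaf : Mat n → PTree n
  | node : Mat n → List (PTree n) → PTree n

namespace PTree

variable {n : ℕ}

/-- The label of the root of the tree. -/
def label : PTree n → Mat n
  | leaf M => M
  | node M _ => M

mutual
/-- The multiset of leaf labels of the tree. -/
def leaves : PTree n → Multiset (Mat n)
  | .leaf M => {M}
  | .node _ cs => leavesList cs
/-- The multiset of leaf labels of a list of trees. -/
def leavesList : List (PTree n) → Multiset (Mat n)
  | [] => 0
  | c :: cs => c.leaves + leavesList cs
end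

mutual
/-- The list of leaf labels of the tree in depth-first (left-to-right) order. -/
def leafList : PTree n → List (Mat n)
  | .leaf M => [M]
  | .node _ cs => leafListList cs
/-- The list of leaf labels of a list of trees, in depth-first order. -/
def leafListList : List (PTree n) → List (Mat n)
  | [] => []
  | c :: cs => c.leafList ++ leafListList cs
end

mutual
/-- The multiset of all node labels of the tree. -/
def nodeLabels : PTree n → Multiset (Mat n)
  | .leaf M => {M}
  | .node M cs => M ::ₘ nodeLabelsList cs
/-- The multiset of all node labels of a list of trees. -/
def nodeLabelsList : List (PTree n) → Multiset (Mat n)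
  | [] => 0
  | c :: cs => c.nodeLabels + nodeLabelsList cs
end

/-- The multiset of labels of all nodes at depth ≥ 2, i.e. strictly below
the children of the root. -/
def deepLabels : PTree n → Multiset (Mat n)
  | .leaf _ => 0
  | .node _ cs => (cs.map fun c =>
      match c with
      | .leaf _ => (0 : Multiset (Mat n))
      | .node _ cs' => nodeLabelsList cs').sum

/-- A valid determining tree over a set `S`: every leaf is labeled by an
element of `S`, every node is labeled by a Pauli operator, and for every
internal node, the labels of its children pairwise commute and the label of
the node is the matrix product of the labels of its children. -/
inductive Valid (S : Set (Mat n)) : PTree n → Prop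
  | leaf {M : Mat n} : M ∈ S → Valid S (PTree.leaf M)
  | node {M : Mat n} {cs : List (PTree n)} :
      IsPauli n M →
      M = (cs.map label).prod →
      cs.Pairwise (fun a b => Commute a.label b.label) →
      (∀ c ∈ cs, Valid S c) →
      Valid S (PTree.node M cs)

/-- Every internal node of the tree has at most two children. -/
inductive Binary : PTree n → Prop
  | leaf (M : Mat n) : Binary (PTree.leaf M)
  | node (M : Mat n) (cs : List (PTree n)) :
      cs.length ≤ 2 → (∀ c ∈ cs, Binary c) → Binary (PTree.node M cs)

open scoped Classical in
/-- The determining set of a tree: the set of operators occurring with odd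
total multiplicity among its leaves. -/
noncomputable def detSet (τ : PTree n) : Set (Mat n) :=
  {M | Odd (τ.leaves.count M)}

end PTree

/-- `τ` is a determining tree for `A` over `S`. -/
def IsDetTree {n : ℕ} (S : Set (Mat n)) (A : Mat n) (τ : PTree n) : Prop :=
  PTree.Valid S τ ∧ τ.label = A

/-- A set `S` of Pauli operators is contextual if for some Pauli operator `A`
there are determining trees for `A` and for `-A` over `S` with identical
determining sets. -/
def Contextual (n : ℕ) (S : Set (Mat n)) : Prop :=
  ∃ (A : Mat n) (τ τ' : PTree n), IsPauli n A ∧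
    IsDetTree S A τ ∧ IsDetTree S (-A) τ' ∧ τ.detSet = τ'.detSet

lemma pauliMat_mul_self (a : Fin 4) : pauliMat a * pauliMat a = 1 := by
  fin_cases a <;> ext i j <;> fin_cases i <;> fin_cases j <;>
    simp [pauliMat, Matrix.mul_apply, Fin.sum_univ_two]

lemma pauliTensor_mul_self (n : ℕ) (f : Fin n → Fin 4) :
    pauliTensor n f * pauliTensor n f = 1 := by
  ext i k
  -- Distributivity turns the sum over `n`-qubit indices into a product of one-qubit sums.
  have h : (pauliTensor n f * pauliTensor n f) i k =
      ∏ l, (pauliMat (f l) * pauliMat (f l)) (i l) (k l) := by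
    simp only [Matrix.mul_apply, pauliTensor, ← Finset.prod_mul_distrib]
    rw [Finset.prod_univ_sum, Fintype.piFinset_univ]
  rw [h]
  simp only [pauliMat_mul_self, Matrix.one_apply]
  by_cases hik : i = k
  · simp [hik]
  · obtain ⟨l, hl⟩ := Function.ne_iff.mp hik
    rw [if_neg hik]
    exact Finset.prod_eq_zero (Finset.mem_univ l) (if_neg hl)

lemma IsPauli.mul_self {n : ℕ} {M : Mat n} (h : IsPauli n M) : M * M = 1 := by
  obtain ⟨ε, f, hε, rfl⟩ := h
  rw [Matrix.smul_mul, Matrix.mul_smul, smul_smul, pauliTensor_mul_self]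
  rcases hε with rfl | rfl <;> simp

lemma prod_eq_one_of_even_count {M : Type*} [CommMonoid M] [DecidableEq M] (s : Multiset M)
    (hsq : ∀ x ∈ s, x * x = 1) (hev : ∀ x, Even (s.count x)) : s.prod = 1 := by
  rw [Finset.prod_multiset_count]
  refine Finset.prod_eq_one fun x hx => ?_
  obtain ⟨k, hk⟩ := hev x
  rw [hk, ← two_mul, pow_mul, pow_two, hsq x (Multiset.mem_toFinset.mp hx), one_pow]

/-- If a commutative monoid `C` maps to the matrices by `φ` with image containing `S`, the leaves of
a determining tree over `S` lift to `C`, and the product of the lifts maps to the root label. -/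
lemma PTree.Valid.exists_lift {n : ℕ} {S : Set (Mat n)} {C : Type*} [CommMonoid C]
    (φ : C →* Mat n) (hφ : ∀ M ∈ S, ∃ c, φ c = M) {τ : PTree n} (h : PTree.Valid S τ) :
    ∃ s : Multiset C, s.map φ = τ.leaves ∧ φ s.prod = τ.label ∧ ∀ c ∈ s, φ c ∈ S := by
  induction h with
  | @leaf M hM =>
    obtain ⟨c, rfl⟩ := hφ M hM
    exact ⟨{c}, by simp [PTree.leaves], by simp [PTree.label], by simpa using hM⟩
  | @node M cs _ hprod _ _ ih =>
    have key : ∃ s : Multiset C, s.map φ = PTree.leavesList cs ∧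
        φ s.prod = (cs.map PTree.label).prod ∧ ∀ c ∈ s, φ c ∈ S := by
      clear * - ih
      induction cs with
      | nil => exact ⟨0, by simp [PTree.leavesList], by simp, by simp⟩
      | cons t ts iht =>
        obtain ⟨s, h1, h2, h3⟩ := ih t (by simp)
        obtain ⟨s', h1', h2', h3'⟩ := iht fun c hc => ih c (by simp [hc])
        refine ⟨s + s', by simp [PTree.leavesList, h1, h1'], by simp [h2, h2'], ?_⟩
        intro c hc
        rcases Multiset.mem_add.mp hc with hc | hc
        exacts [h3 c hc, h3' c hc]
    obtain ⟨s, h1, h2, h3⟩ := key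
    exact ⟨s, by simp [PTree.leaves, h1], by simp [PTree.label, h2, hprod], h3⟩

/-- Every set of pairwise-commuting n-qubit Pauli operators
(in particular any set of diagonal Pauli operators, such as the terms of a
QAOA Hamiltonian) is noncontextual. -/
theorem noncontextual_of_pairwise_commute {n : ℕ} (S : Set (Mat n))
    (hS : ∀ M ∈ S, IsPauli n M)
    (hcomm : ∀ A ∈ S, ∀ B ∈ S, Commute A B) :
    ¬ Contextual n S := by
  classical
  rintro ⟨A, τ, τ', hA, ⟨hτ, hl⟩, ⟨hτ', hl'⟩, hdet⟩
  obtain ⟨C, _, φ, hinj, hφ⟩ : ∃ (C : Type) (_ : CommMonoid C) (φ : C →* Mat n),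
      Function.Injective φ ∧ ∀ M ∈ S, ∃ c, φ c = M := by
    have hc := Submonoid.isMulCommutative_closure (Mat n) (s := S) fun a ha b hb =>
      hcomm a ha b hb
    refine ⟨Submonoid.closure S, { mul_comm := hc.is_comm.comm },
      (Submonoid.closure S).subtype, Subtype.val_injective, fun M hM => ?_⟩
    exact ⟨⟨M, Submonoid.subset_closure hM⟩, rfl⟩
  obtain ⟨s, h1, h2, h3⟩ := hτ.exists_lift φ hφ
  obtain ⟨s', h1', h2', h3'⟩ := hτ'.exists_lift φ hφ
  have hone : (s + s').prod = 1 := by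
    apply prod_eq_one_of_even_count
    · intro c hc
      apply hinj
      rw [map_mul, map_one]
      rcases Multiset.mem_add.mp hc with hc | hc
      exacts [(hS _ (h3 c hc)).mul_self, (hS _ (h3' c hc)).mul_self]
    · intro c
      have hodd : Odd (s.count c) ↔ Odd (s'.count c) := by
        rw [← Multiset.count_map_eq_count' φ s hinj, ← Multiset.count_map_eq_count' φ s' hinj,
          h1, h1']
        have := Set.ext_iff.mp hdet (φ c)
        simp only [PTree.detSet, Set.mem_ofPred_eq] at this
        convert this
      rw [Multiset.count_add, Nat.even_add, ← Nat.not_odd_iff_even, ← Nat.not_odd_iff_even, hodd]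
  have h := congrArg φ hone
  rw [Multiset.prod_add, map_mul, h2, h2', hl, hl', map_one, mul_neg, hA.mul_self] at h
  have h00 := congrFun (congrFun h 0) 0
  simp only [Matrix.neg_apply, Matrix.one_apply_eq] at h00
  norm_num at h00
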